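/- arXiv:2209.07203 — 2 statements merged into one kernel-verified Lean document; each statement's English description precedes it below -/
import Mathlib

section
/- Let S be a semiheap with two biunit pairs (a,b) and (c,d). Then the left shift λ_{da} : x ↦ [d,a,x] is an isomorphism of monoids from (S, ∘_a, b) to (S, ∘_c, d): it is bijective (with inverse λ_{bc} : x ↦ [b,c,x]), satisfies λ_{da}(x ∘_a y) = λ_{da}(x) ∘_c λ_{da}(y) for all x,y ∈ S, and λ_{da}(b) = d. Moreover the switches μ_{bb} and μ_{dd} are related by λ_{da}(μ_{bb}(x)) = μ_{dd}(λ_{cb}(x)) for all x ∈ S, where λ_{cb} : x ↦ [c,b,x] is the inverse of λ_{ad} : x ↦ [a,d,x]. -/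
/-!
Left shifts compose by `λ_{pq} ∘ λ_{rs} = λ_{[p,q,r]s}`, and the reverse of a biunit pair is again
a biunit pair, so `λ_{da} ∘ λ_{bc} = λ_{[d,a,b]c} = λ_{dc} = id`. The other three inverse laws are
this one with the two pairs exchanged, reversed, or both. The switches are related because
`λ_{da} ∘ μ_{bb}` and `μ_{dd} ∘ λ_{cb}` are both equal to `μ_{db}`.
-/

open Function

section Semiheap

variable {S : Type*}

/-- `t` is the operation of a semiheap: it satisfies the para-associative law
`[[p,q,r],s,u] = [p,[s,r,q],u] = [p,q,[r,s,u]]`, stored as two equations with the same left side. -/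
structure IsSemiheap (t : S → S → S → S) : Prop where
  assoc_middle : ∀ p q r s u, t (t p q r) s u = t p (t s r q) u
  assoc : ∀ p q r s u, t (t p q r) s u = t p q (t r s u)

/-- `(a, b)` is a biunit pair for `t`: inserting `a, b` to the left or to the right of an element
leaves it unchanged. -/
structure IsBiunitPair (t : S → S → S → S) (a b : S) : Prop where
  left : ∀ x, t a b x = x
  right : ∀ x, t x a b = x

/-- The binary operation `x ∘_a y = [x,a,y]`; its identity is `b` when `(a, b)` is a biunit pair. -/
def mulAt (t : S → S → S → S) (a x y : S) : S := t x a y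

/-- The left shift `λ_{pq} : x ↦ [p,q,x]`. -/
def leftShift (t : S → S → S → S) (p q x : S) : S := t p q x

/-- The middle shift `μ_{pq} : x ↦ [p,x,q]`; the switch of a biunit pair `(a, b)` is `μ_{bb}`. -/
def middleShift (t : S → S → S → S) (p q x : S) : S := t p x q

variable {t : S → S → S → S} {a b c d : S}

theorem IsSemiheap.leftShift_leftShift (hS : IsSemiheap t) (p q r s x : S) :
    leftShift t p q (leftShift t r s x) = leftShift t (t p q r) s x :=
  (hS.assoc p q r s x).symm

theorem IsSemiheap.leftShift_mulAt (hS : IsSemiheap t) (p q r x y : S) :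
    leftShift t p q (mulAt t r x y) = mulAt t r (leftShift t p q x) y :=
  (hS.assoc p q x r y).symm

namespace IsBiunitPair

theorem symm (hab : IsBiunitPair t a b) (hS : IsSemiheap t) : IsBiunitPair t b a where
  left x := calc
    t b a x = t a b (t b a x) := (hab.left _).symm
    _ = t (t a b b) a x := (hS.assoc a b b a x).symm
    _ = t a (t a b b) x := hS.assoc_middle a b b a x
    _ = t a b x := by rw [hab.left]
    _ = x := hab.left x
  right x := calc
    t x b a = t (t x b a) a b := (hab.right _).symm
    _ = t x (t a a b) b := hS.assoc_middle x b a a b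
    _ = t x a b := by rw [hab.right]
    _ = x := hab.right x

theorem leftInverse_leftShift (hab : IsBiunitPair t a b) (hcd : IsBiunitPair t c d)
    (hS : IsSemiheap t) : LeftInverse (leftShift t d a) (leftShift t b c) := fun x => calc
  leftShift t d a (leftShift t b c x) = leftShift t (t d a b) c x :=
    hS.leftShift_leftShift d a b c x
  _ = leftShift t d c x := by rw [hab.right]
  _ = x := (hcd.symm hS).left x

theorem mulAt_leftShift (hcd : IsBiunitPair t c d) (hS : IsSemiheap t) (r x y : S) :
    mulAt t c x (leftShift t d r y) = mulAt t r x y := calc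
  t x c (t d r y) = t (t x c d) r y := (hS.assoc x c d r y).symm
  _ = t x r y := by rw [hcd.right]

theorem leftShift_map_mulAt (hcd : IsBiunitPair t c d) (hS : IsSemiheap t) (r x y : S) :
    leftShift t d r (mulAt t r x y) = mulAt t c (leftShift t d r x) (leftShift t d r y) := by
  rw [hcd.mulAt_leftShift hS, hS.leftShift_mulAt]

theorem leftShift_middleShift (hab : IsBiunitPair t a b) (hS : IsSemiheap t) (p q x : S) :
    leftShift t p a (middleShift t b q x) = middleShift t p q x := calc
  t p a (t b x q) = t (t p a b) x q := (hS.assoc p a b x q).symm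
  _ = t p x q := by rw [hab.right]

theorem middleShift_leftShift (hcd : IsBiunitPair t c d) (hS : IsSemiheap t) (p q x : S) :
    middleShift t p d (leftShift t c q x) = middleShift t p q x := calc
  t p (t c q x) d = t (t p x q) c d := (hS.assoc_middle p x q c d).symm
  _ = t p x q := hcd.right _

theorem leftShift_switch (hab : IsBiunitPair t a b) (hcd : IsBiunitPair t c d)
    (hS : IsSemiheap t) (x : S) :
    leftShift t d a (middleShift t b b x) = middleShift t d d (leftShift t c b x) := by
  rw [hab.leftShift_middleShift hS, hcd.middleShift_leftShift hS]

end IsBiunitPair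

end Semiheap

/-- For two biunit pairs `(a,b)` and `(c,d)` of a semiheap `(S,t)`, the
left shift `λ_{da} : x ↦ t d a x` is an isomorphism of monoids `(S, ∘_a, b) → (S, ∘_c, d)`
with inverse `λ_{bc}`; moreover `λ_{da} ∘ μ_{bb} = μ_{dd} ∘ λ_{cb}` where
`λ_{cb}` is the inverse of `λ_{ad}`. -/
theorem stmt_17 {S : Type*} (t : S → S → S → S)
    (h1 : ∀ a b c d e, t (t a b c) d e = t a (t d c b) e)
    (h2 : ∀ a b c d e, t (t a b c) d e = t a b (t c d e))
    (a b c d : S)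
    (hab : ∀ x, t a b x = x ∧ t x a b = x)
    (hcd : ∀ x, t c d x = x ∧ t x c d = x) :
    ((∀ x, t d a (t b c x) = x) ∧ (∀ x, t b c (t d a x) = x)) ∧
    (∀ x y, t d a (t x a y) = t (t d a x) c (t d a y)) ∧
    (t d a b = d) ∧
    ((∀ x, t c b (t a d x) = x) ∧ (∀ x, t a d (t c b x) = x)) ∧
    (∀ x, t d a (t b x b) = t d (t c b x) d) := by
  have hS : IsSemiheap t := ⟨h1, h2⟩
  have ab : IsBiunitPair t a b := ⟨fun x => (hab x).1, fun x => (hab x).2⟩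
  have cd : IsBiunitPair t c d := ⟨fun x => (hcd x).1, fun x => (hcd x).2⟩
  have ba : IsBiunitPair t b a := ab.symm hS
  have dc : IsBiunitPair t d c := cd.symm hS
  exact ⟨⟨ab.leftInverse_leftShift cd hS, cd.leftInverse_leftShift ab hS⟩,
    cd.leftShift_map_mulAt hS a,
    ab.right d,
    ⟨ba.leftInverse_leftShift dc hS, dc.leftInverse_leftShift ba hS⟩,
    ab.leftShift_switch cd hS⟩
end

section
/- Let (S,·,1) be a monoid and φ : S → S a bijective switch. Then the pair (φ⁻¹(1), 1) is a biunit pair in the semiheap (S, [a,b,c]^φ := a · φ(b) · c); that is, φ⁻¹(1) · φ(1) · x = x = x · φ(1) · φ⁻¹(1) for all x ∈ S. -/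
/-- A switch, stated for an arbitrary multiplication: the identity under which
`a * φ b * c` is the ternary operation of a semiheap when the multiplication is associative. -/
def IsSwitch {S : Type*} [Mul S] (φ : S → S) : Prop :=
  ∀ a b c : S, φ (a * φ b * c) = φ c * b * φ a

namespace IsSwitch

variable {S : Type*} [MulOneClass S] {φ : S → S} {u : S}

theorem mul_map_one_of_map_eq_one (hφ : IsSwitch φ) (hu : φ u = 1) : u * φ 1 = 1 :=
  calc
    u * φ 1 = φ u * u * φ 1 := by rw [hu, one_mul]
    _ = φ (1 * φ u * u) := (hφ 1 u u).symm
    _ = 1 := by rw [hu, one_mul, one_mul, hu]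

theorem map_one_mul_of_map_eq_one (hφ : IsSwitch φ) (hu : φ u = 1) : φ 1 * u = 1 :=
  calc
    φ 1 * u = φ 1 * u * φ u := by rw [hu, mul_one]
    _ = φ (u * φ u * 1) := (hφ u u 1).symm
    _ = 1 := by rw [hu, mul_one, mul_one, hu]

end IsSwitch

/-- For a monoid `(S,*,1)` with a bijective switch `φ`, the pair
`(φ⁻¹ 1, 1)` is a biunit pair of the semiheap `[a,b,c]^φ := a * φ b * c`. -/
theorem stmt_18 {S : Type*} [Monoid S] (φ : S → S)
    (hφ : ∀ a b c : S, φ (a * φ b * c) = φ c * b * φ a)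
    (hbij : Function.Bijective φ) :
    ∀ x : S, Function.invFun φ 1 * φ 1 * x = x ∧ x * φ 1 * Function.invFun φ 1 = x := by
  intro x
  have switch : IsSwitch φ := hφ
  have map_invFun_one : φ (Function.invFun φ 1) = 1 :=
    Function.rightInverse_invFun hbij.surjective 1
  constructor
  · rw [switch.mul_map_one_of_map_eq_one map_invFun_one, one_mul]
  · rw [mul_assoc, switch.map_one_mul_of_map_eq_one map_invFun_one, mul_one]
end
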